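/- Let {a_α : α < ω₁} and {b_α : α < ω₁} be almost disjoint families of infinite subsets of ℕ, and for each α < ω₁ let 𝒲_α and 𝒱_α be free ultrafilters on ℕ with a_α ∈ 𝒲_α and b_α ∈ 𝒱_α. Suppose that for each γ < ω₁ the set S_γ = {α < ω₁ : a_γ ∈ 𝒱_α or b_γ ∈ 𝒲_α} is countable. Then there exist an uncountable set Λ ⊆ ω₁ and, for each α ∈ Λ, sets a′_α ⊆ a_α with a′_α ∈ 𝒲_α and b′_α ⊆ b_α with b′_α ∈ 𝒱_α, such that {a′_α ∪ b′_α : α ∈ Λ} is an almost disjoint family. -/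

import Mathlib

theorem adu_sep {ι : Type} (a : ι → Set ℕ) (ha : ∀ α β, α ≠ β → (a α ∩ a β).Finite)
    (S C D : Set ι) (hS : S.Countable) (hC : C ⊆ S) (hD : D ⊆ S) (hCD : ∀ x ∈ C, x ∉ D) :
    ∃ X : Set ℕ, (∀ β ∈ C, (a β \ X).Finite) ∧ (∀ β ∈ D, (a β ∩ X).Finite) := by
  obtain ⟨e, he⟩ := Set.countable_iff_exists_injOn.1 hS
  have hfin : ∀ n : ℕ, {γ | γ ∈ S ∧ e γ ≤ n}.Finite := by
    intro n
    apply Set.Finite.of_finite_image (f := e)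
    · exact (Set.finite_Iic n).subset (by rintro _ ⟨γ, hγ, rfl⟩; exact hγ.2)
    · exact he.mono (fun γ hγ => hγ.1)
  refine ⟨{n | ∃ β ∈ C, n ∈ a β ∧ ∀ γ ∈ D, e γ ≤ e β → n ∉ a γ}, ?_, ?_⟩
  · intro β hβ
    have h1 : {γ | γ ∈ D ∧ e γ ≤ e β}.Finite :=
      (hfin (e β)).subset (fun γ hγ => ⟨hD hγ.1, hγ.2⟩)
    refine (h1.biUnion (t := fun γ => a β ∩ a γ) ?_).subset ?_
    · intro γ hγ
      exact ha _ _ (by rintro rfl; exact hCD _ hβ hγ.1)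
    · rintro n ⟨hn, hX⟩
      by_contra hcon
      refine hX ⟨β, hβ, hn, fun γ hγ hle hnγ => hcon ?_⟩
      simp only [Set.mem_iUnion]
      exact ⟨γ, ⟨hγ, hle⟩, hn, hnγ⟩
  · intro δ hδ
    have h1 : {γ | γ ∈ C ∧ e γ ≤ e δ}.Finite :=
      (hfin (e δ)).subset (fun γ hγ => ⟨hC hγ.1, hγ.2⟩)
    refine (h1.biUnion (t := fun γ => a δ ∩ a γ) ?_).subset ?_
    · intro γ hγ
      exact ha _ _ (by rintro rfl; exact hCD _ hγ.1 hδ)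
    · rintro n ⟨hn, β, hβ, hnβ, hall⟩
      simp only [Set.mem_iUnion]
      refine ⟨β, ⟨hβ, ?_⟩, hn, hnβ⟩
      by_contra hlt
      exact hall δ hδ (by omega) hn

theorem adu_alt {ι : Type} (a : ι → Set ℕ) (ha : ∀ α β, α ≠ β → (a α ∩ a β).Finite)
    (S C D : Set ι) (hS : S.Countable) (hC : C ⊆ S) (hD : D ⊆ S) (hCD : ∀ x ∈ C, x ∉ D)
    (V : Ultrafilter ℕ) :
    (∃ B ∈ V, ∀ β ∈ C, (B ∩ a β).Finite) ∨ (∃ B ∈ V, ∀ β ∈ D, (B ∩ a β).Finite) := by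
  obtain ⟨X, h1, h2⟩ := adu_sep a ha S C D hS hC hD hCD
  rcases V.mem_or_compl_mem X with h | h
  · exact Or.inr ⟨X, h, fun β hβ => by rw [Set.inter_comm]; exact h2 β hβ⟩
  · exact Or.inl ⟨Xᶜ, h, fun β hβ => by
      rw [Set.inter_comm, ← Set.diff_eq]; exact h1 β hβ⟩

theorem adu_pick (P Q : Fin 3 → Prop) (hP : ∀ i j, i ≠ j → P i ∨ P j)
    (hQ : ∀ i j, i ≠ j → Q i ∨ Q j) : ∃ i, P i ∧ Q i := by
  have p1 := hP 0 1 (by decide)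
  have p2 := hP 0 2 (by decide)
  have p3 := hP 1 2 (by decide)
  have q1 := hQ 0 1 (by decide)
  have q2 := hQ 0 2 (by decide)
  have q3 := hQ 1 2 (by decide)
  by_contra hcon
  have c0 := fun h => hcon ⟨0, h⟩
  have c1 := fun h => hcon ⟨1, h⟩
  have c2 := fun h => hcon ⟨2, h⟩
  tauto

theorem adu_color {ι : Type} (r : ι → ι → Prop) (hr : WellFounded r)
    (G : ι → Set ι → Prop)
    (hG : ∀ α (f : ι → Fin 3), ∃ i, G α {β | r β α ∧ f β = i}) :
    ∃ f : ι → Fin 3, ∀ α, G α {β | r β α ∧ f β = f α} := by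
  classical
  let F : (α : ι) → ((β : ι) → r β α → Fin 3) → Fin 3 := fun α g =>
    (hG α (fun β => if h : r β α then g β h else 0)).choose
  refine ⟨hr.fix F, fun α => ?_⟩
  have h := (hG α (fun β => if h : r β α then hr.fix F β else 0)).choose_spec
  have e : hr.fix F α = (hG α (fun β => if h : r β α then hr.fix F β else 0)).choose :=
    hr.fix_eq F α
  rw [← e] at h
  convert h using 2
  ext β
  constructor
  · rintro ⟨h1, h2⟩
    exact ⟨h1, by simp [h1, h2]⟩
  · rintro ⟨h1, h2⟩
    exact ⟨h1, by simpa [h1] using h2⟩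

/-- Let `{a α}` and `{b α}` be almost disjoint families of infinite subsets of ℕ
indexed by ω₁ (here: by a type `ι` of cardinality ℵ₁), and for each `α` let
`𝒲 α` and `𝒱 α` be free ultrafilters with `a α ∈ 𝒲 α` and `b α ∈ 𝒱 α`.  If for
each `γ` the set `S γ = {α : a γ ∈ 𝒱 α or b γ ∈ 𝒲 α}` is countable, then there
are an uncountable `Λ ⊆ ι` and, for each `α ∈ Λ`, sets `a' α ⊆ a α` with
`a' α ∈ 𝒲 α` and `b' α ⊆ b α` with `b' α ∈ 𝒱 α`, such that
`{a' α ∪ b' α : α ∈ Λ}` is an almost disjoint family. -/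
theorem almost_disjoint_union_family (ι : Type) (hι : Cardinal.mk ι = Cardinal.aleph 1)
    (a b : ι → Set ℕ)
    (ha_inf : ∀ α, (a α).Infinite) (hb_inf : ∀ α, (b α).Infinite)
    (ha_ad : ∀ α β, α ≠ β → (a α ∩ a β).Finite)
    (hb_ad : ∀ α β, α ≠ β → (b α ∩ b β).Finite)
    (W V : ι → Ultrafilter ℕ)
    (hW_free : ∀ α, ∀ s : Set ℕ, s.Finite → s ∉ W α)
    (hV_free : ∀ α, ∀ s : Set ℕ, s.Finite → s ∉ V α)
    (haW : ∀ α, a α ∈ W α) (hbV : ∀ α, b α ∈ V α)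
    (hS : ∀ γ, {α : ι | a γ ∈ V α ∨ b γ ∈ W α}.Countable) :
    ∃ Λ : Set ι, ¬Λ.Countable ∧
      ∃ a' b' : ι → Set ℕ,
        (∀ α ∈ Λ, a' α ⊆ a α ∧ a' α ∈ W α ∧ b' α ⊆ b α ∧ b' α ∈ V α) ∧
        (∀ α ∈ Λ, ∀ β ∈ Λ, α ≠ β →
          ((a' α ∪ b' α) ∩ (a' β ∪ b' β)).Finite) := by
  obtain ⟨r, hwo, hr⟩ := Cardinal.ord_eq ι
  have hcount : ∀ α, {β | r β α}.Countable := by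
    intro α
    have h1 : Ordinal.typein r α < (Cardinal.mk ι).ord := by
      rw [hr]; exact Ordinal.typein_lt_type r α
    rw [Cardinal.lt_ord, hι, Ordinal.card_typein] at h1
    rw [← Set.countable_coe_iff, ← Cardinal.mk_le_aleph0_iff, ← Order.lt_succ_iff,
      ← Cardinal.aleph_zero, ← Cardinal.aleph_succ]
    simpa using h1
  obtain ⟨f, hf⟩ := adu_color r hwo.wf
    (fun α C => (∃ B ∈ V α, ∀ β ∈ C, (B ∩ a β).Finite) ∧
      (∃ B ∈ W α, ∀ β ∈ C, (B ∩ b β).Finite)) (by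
    intro α f
    apply adu_pick
    · intro i j hij
      exact adu_alt a ha_ad _ _ _ (hcount α) (fun _ h => h.1) (fun _ h => h.1)
        (fun x h h' => hij (h.2.symm.trans h'.2)) _
    · intro i j hij
      exact adu_alt b hb_ad _ _ _ (hcount α) (fun _ h => h.1) (fun _ h => h.1)
        (fun x h h' => hij (h.2.symm.trans h'.2)) _)
  have hunc : ∃ i, ¬ {α | f α = i}.Countable := by
    by_contra! hcon
    have h1 : (⋃ i, {α | f α = i}).Countable := Set.countable_iUnion hcon
    have h2 : (⋃ i, {α | f α = i}) = Set.univ := by ext; simp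
    rw [h2, Set.countable_univ_iff, ← Cardinal.mk_le_aleph0_iff, hι] at h1
    exact absurd h1 (not_le.2 Cardinal.aleph0_lt_aleph_one)
  obtain ⟨i, hi⟩ := hunc
  choose hV hW using hf
  choose B hBV hB using hV
  choose A hAW hA using hW
  have key : ∀ α β, r α β → f α = i → f β = i →
      (((a α ∩ A α) ∪ (b α ∩ B α)) ∩ ((a β ∩ A β) ∪ (b β ∩ B β))).Finite := by
    intro α β hαβ h1 h2
    have hne : α ≠ β := by rintro rfl; exact irrefl _ hαβ
    have m : α ∈ {γ | r γ β ∧ f γ = f β} := ⟨hαβ, h1.trans h2.symm⟩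
    refine ((((ha_ad α β hne).union (hb_ad α β hne)).union (hB β α m)).union
      (hA β α m)).subset ?_
    rintro n ⟨hn | hn, hn' | hn'⟩
    · exact Or.inl (Or.inl (Or.inl ⟨hn.1, hn'.1⟩))
    · exact Or.inl (Or.inr ⟨hn'.2, hn.1⟩)
    · exact Or.inr ⟨hn'.2, hn.1⟩
    · exact Or.inl (Or.inl (Or.inr ⟨hn.1, hn'.1⟩))
  refine ⟨{α | f α = i}, hi, fun α => a α ∩ A α, fun α => b α ∩ B α, ?_, ?_⟩
  · intro α _
    exact ⟨Set.inter_subset_left, Filter.inter_mem (haW α) (hAW α),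
      Set.inter_subset_left, Filter.inter_mem (hbV α) (hBV α)⟩
  · intro α hα β hβ hne
    rcases trichotomous_of r α β with h | h | h
    · exact key α β h hα hβ
    · exact absurd h hne
    · rw [Set.inter_comm]; exact key β α h hβ hα
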